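/- arXiv:1705.08445 — 6 statements merged into one kernel-verified Lean document; each statement's English description precedes it below -/
import Mathlib

section
/- The empirical overlap matrix F̄ is irreducible if and only if for every nonempty proper subset A of {1,…,L}, the set ∪_{i∈A}{x : ψ_i(x) > 0} contains at least one sample point X^j_t with index j ∉ A. -/
open MeasureTheory Finset

/-- The empirical overlap matrix `F̄ i j = (1/N_i) ∑_{t=1}^{N_i} ψ_j*(X^i_t)`, where
`ψ_j*(x) = ψ_j(x) / ∑_k ψ_k(x)`. -/
noncomputable def empiricalOverlapMatrix {Ω : Type*} {L : ℕ} (ψ : Fin L → Ω → ℝ)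
    (N : Fin L → ℕ) (X : (i : Fin L) → Fin (N i) → Ω) (i j : Fin L) : ℝ :=
  (1 / (N i : ℝ)) * ∑ t, ψ j (X i t) / ∑ k, ψ k (X i t)

/-- A nonnegative matrix `M` is irreducible iff for every nonempty proper subset `A` of the
indices there are `i ∈ A` and `j ∉ A` with `M j i > 0`. -/
def MatIrreducible {L : ℕ} (M : Fin L → Fin L → ℝ) : Prop :=
  ∀ A : Finset (Fin L), A.Nonempty → A ≠ Finset.univ → ∃ i ∈ A, ∃ j ∉ A, 0 < M j i

theorem empiricalOverlapMatrix_pos_iff {Ω : Type*} {L : ℕ} {ψ : Fin L → Ω → ℝ} {N : Fin L → ℕ}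
    {X : (i : Fin L) → Fin (N i) → Ω} {i j : Fin L} (hN : 0 < N i)
    (hnonneg : ∀ t, 0 ≤ ψ j (X i t)) (hsum : ∀ t, 0 < ∑ k, ψ k (X i t)) :
    0 < empiricalOverlapMatrix ψ N X i j ↔ ∃ t, 0 < ψ j (X i t) := by
  have weight_pos : 0 < 1 / (N i : ℝ) := one_div_pos.mpr (Nat.cast_pos.mpr hN)
  have term_nonneg : ∀ t ∈ univ, 0 ≤ ψ j (X i t) / ∑ k, ψ k (X i t) :=
    fun t _ => div_nonneg (hnonneg t) (hsum t).le
  calc 0 < empiricalOverlapMatrix ψ N X i j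
      ↔ 0 < ∑ t, ψ j (X i t) / ∑ k, ψ k (X i t) := mul_pos_iff_of_pos_left weight_pos
    _ ↔ ∃ t, 0 < ψ j (X i t) / ∑ k, ψ k (X i t) := by
      simp only [sum_pos_iff_of_nonneg term_nonneg, mem_univ, true_and]
    _ ↔ ∃ t, 0 < ψ j (X i t) := exists_congr fun t => div_pos_iff_of_pos_right (hsum t)

/-- the empirical overlap matrix `F̄` is irreducible if and only if for every
nonempty proper subset `A` of `{1,…,L}` the set `⋃_{i∈A} {x : ψ_i(x) > 0}` contains at least
one sample point `X^j_t` with `j ∉ A`. -/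
theorem empiricalOverlapMatrix_irreducible_iff
    {Ω : Type*} [MeasurableSpace Ω] {L : ℕ} (ψ : Fin L → Ω → ℝ)
    (hnonneg : ∀ i x, 0 ≤ ψ i x)
    (hsum : ∀ x, 0 < ∑ k, ψ k x)
    (N : Fin L → ℕ) (hN : ∀ i, 1 ≤ N i)
    (X : (i : Fin L) → Fin (N i) → Ω) :
    MatIrreducible (empiricalOverlapMatrix ψ N X) ↔
      ∀ A : Finset (Fin L), A.Nonempty → A ≠ Finset.univ →
        ∃ j ∉ A, ∃ t : Fin (N j), X j t ∈ ⋃ i ∈ A, {x | 0 < ψ i x} := by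
  have entry_pos_iff (i j : Fin L) :
      0 < empiricalOverlapMatrix ψ N X j i ↔ ∃ t, 0 < ψ i (X j t) :=
    empiricalOverlapMatrix_pos_iff (hN j) (fun t => hnonneg i (X j t)) fun t => hsum (X j t)
  refine forall_congr' fun A => imp_congr_right fun _ => imp_congr_right fun _ => ?_
  simp only [entry_pos_iff, Set.mem_iUnion₂, Set.mem_ofPred_eq, exists_prop]
  constructor
  · rintro ⟨i, hi, j, hj, t, ht⟩
    exact ⟨j, hj, t, i, hi, ht⟩
  · rintro ⟨j, hj, t, i, hi, ht⟩
    exact ⟨i, hi, j, hj, t, ht⟩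
end

section
/- The overlap matrix F is stochastic (its entries are nonnegative and each row sums to one), the weight vector z is a probability vector, and F is reversible with respect to z, i.e. z_i F_{ij} = z_j F_{ji} for all i,j; consequently z^⊤ F = z^⊤, so z is a stationary distribution of F. -/
open MeasureTheory Finset

/-- The overlap matrix `F i j = π_i[ψ_j*]`, where `π_i(dx) = ψ_i(x) π(dx) / π[ψ_i]` and
`ψ_j*(x) = ψ_j(x) / ∑_k ψ_k(x)`. -/
noncomputable def overlapMatrix {Ω : Type*} [MeasurableSpace Ω] (π : Measure Ω) {L : ℕ}
    (ψ : Fin L → Ω → ℝ) (i j : Fin L) : ℝ :=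
  (∫ x, ψ i x * (ψ j x / ∑ k, ψ k x) ∂π) / (∫ x, ψ i x ∂π)

/-- The weight vector `z i = π[ψ_i] / Ψ` with `Ψ = ∑_k π[ψ_k]`. -/
noncomputable def weightVector {Ω : Type*} [MeasurableSpace Ω] (π : Measure Ω) {L : ℕ}
    (ψ : Fin L → Ω → ℝ) (i : Fin L) : ℝ :=
  (∫ x, ψ i x ∂π) / ∑ k, ∫ x, ψ k x ∂π

/-! The integral `π[ψ_i ψ_j / ∑ k, ψ_k] = Ψ z_i F_{ij}` is symmetric in `i` and `j`, which is
reversibility. Its integrand lies between `0` and `ψ_i`, and summing it over `j` gives `ψ_i`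
because the `ψ_j*` add up to one wherever `ψ_i ≠ 0`; so the rows of `F` sum to one. Summing the
reversibility identity over `i` then gives stationarity. -/

section Normalization

variable {ι 𝕜 : Type*} [Fintype ι] [Field 𝕜] [LinearOrder 𝕜] [IsStrictOrderedRing 𝕜] {w : ι → 𝕜}

lemma div_mem_stdSimplex {s : 𝕜} (hw : ∀ i, 0 ≤ w i) (hsum : ∑ i, w i = s) (hs : 0 < s) :
    (fun i ↦ w i / s) ∈ stdSimplex 𝕜 ι :=
  ⟨fun i ↦ div_nonneg (hw i) hs.le, by rw [← sum_div, hsum, div_self hs.ne']⟩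

lemma div_sum_mem_Icc (hw : ∀ i, 0 ≤ w i) (i : ι) : w i / ∑ k, w k ∈ Set.Icc 0 1 :=
  have hS : 0 ≤ ∑ k, w k := sum_nonneg fun k _ ↦ hw k
  ⟨div_nonneg (hw i) hS,
    div_le_one_of_le₀ (single_le_sum (fun k _ ↦ hw k) (mem_univ i)) hS⟩

-- If the total weight vanishes, so does `w i`, and the value of `0 / 0` is irrelevant.
lemma sum_mul_div_sum (hw : ∀ i, 0 ≤ w i) (i : ι) : ∑ j, w i * (w j / ∑ k, w k) = w i := by
  have hvanish : ∑ k, w k = 0 → w i = 0 := fun h ↦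
    (sum_eq_zero_iff_of_nonneg fun k _ ↦ hw k).1 h i (mem_univ i)
  rw [← mul_sum, ← sum_div, ← mul_div_assoc, mul_div_cancel_of_imp hvanish]

end Normalization

lemma sum_mul_eq_of_reversible {ι R : Type*} [Fintype ι] [NonAssocSemiring R]
    {z : ι → R} {F : ι → ι → R} {j : ι} (hrev : ∀ i, z i * F i j = z j * F j i)
    (hrow : ∑ i, F j i = 1) : ∑ i, z i * F i j = z j := by
  simp only [hrev, ← mul_sum, hrow, mul_one]

section Integral

variable {Ω ι : Type*} [MeasurableSpace Ω] {μ : Measure Ω} [Fintype ι] {ψ : ι → Ω → ℝ}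

lemma integrable_mul_div_sum {f : Ω → ℝ} (hf : Integrable f μ) (hψ : ∀ k, AEMeasurable (ψ k) μ)
    (hnonneg : ∀ᵐ x ∂μ, ∀ k, 0 ≤ ψ k x) (j : ι) :
    Integrable (fun x ↦ f x * (ψ j x / ∑ k, ψ k x)) μ := by
  have hmeas : AEMeasurable (fun x ↦ ψ j x / ∑ k, ψ k x) μ :=
    (hψ j).div (univ.aemeasurable_fun_sum fun k _ ↦ hψ k)
  refine hf.mul_bdd (c := 1) hmeas.aestronglyMeasurable ?_
  filter_upwards [hnonneg] with x hx
  obtain ⟨h_nonneg, h_le_one⟩ := div_sum_mem_Icc hx j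
  rwa [Real.norm_of_nonneg h_nonneg]

lemma integral_mul_div_sum_nonneg (hnonneg : ∀ᵐ x ∂μ, ∀ k, 0 ≤ ψ k x) (i j : ι) :
    0 ≤ ∫ x, ψ i x * (ψ j x / ∑ k, ψ k x) ∂μ := by
  refine integral_nonneg_of_ae ?_
  filter_upwards [hnonneg] with x hx
  exact mul_nonneg (hx i) (div_sum_mem_Icc hx j).1

lemma sum_integral_mul_div_sum {i : ι} (hint : Integrable (ψ i) μ)
    (hψ : ∀ k, AEMeasurable (ψ k) μ) (hnonneg : ∀ᵐ x ∂μ, ∀ k, 0 ≤ ψ k x) :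
    ∑ j, ∫ x, ψ i x * (ψ j x / ∑ k, ψ k x) ∂μ = ∫ x, ψ i x ∂μ := by
  rw [← integral_finsetSum _ fun j _ ↦ integrable_mul_div_sum hint hψ hnonneg j]
  refine integral_congr_ae ?_
  filter_upwards [hnonneg] with x hx
  exact sum_mul_div_sum hx i

end Integral

section OverlapMatrix

variable {Ω : Type*} [MeasurableSpace Ω] {π : Measure Ω} {L : ℕ} {ψ : Fin L → Ω → ℝ}

lemma overlapMatrix_mem_stdSimplex {i : Fin L} (hψ : ∀ k, AEMeasurable (ψ k) π)
    (hnonneg : ∀ᵐ x ∂π, ∀ k, 0 ≤ ψ k x) (hint : Integrable (ψ i) π) (hpos : 0 < ∫ x, ψ i x ∂π) :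
    overlapMatrix π ψ i ∈ stdSimplex ℝ (Fin L) :=
  div_mem_stdSimplex (integral_mul_div_sum_nonneg hnonneg i)
    (sum_integral_mul_div_sum hint hψ hnonneg) hpos

lemma weightVector_mem_stdSimplex [NeZero L] (hpos : ∀ i, 0 < ∫ x, ψ i x ∂π) :
    weightVector π ψ ∈ stdSimplex ℝ (Fin L) :=
  div_mem_stdSimplex (fun i ↦ (hpos i).le) rfl (sum_pos (fun i _ ↦ hpos i) univ_nonempty)

lemma weightVector_mul_overlapMatrix {i : Fin L} (hi : ∫ x, ψ i x ∂π ≠ 0) (j : Fin L) :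
    weightVector π ψ i * overlapMatrix π ψ i j =
      (∫ x, ψ i x * (ψ j x / ∑ k, ψ k x) ∂π) / ∑ k, ∫ x, ψ k x ∂π :=
  div_mul_div_cancel₀' hi _ _

lemma weightVector_mul_overlapMatrix_comm {i j : Fin L} (hi : ∫ x, ψ i x ∂π ≠ 0)
    (hj : ∫ x, ψ j x ∂π ≠ 0) :
    weightVector π ψ i * overlapMatrix π ψ i j = weightVector π ψ j * overlapMatrix π ψ j i := by
  simp only [weightVector_mul_overlapMatrix hi, weightVector_mul_overlapMatrix hj,
    mul_div_left_comm]

end OverlapMatrix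

theorem overlapMatrix_stochastic_and_reversible_general
    {Ω : Type*} [MeasurableSpace Ω] (π : Measure Ω) {L : ℕ} [NeZero L] (ψ : Fin L → Ω → ℝ)
    (hnonneg : ∀ᵐ x ∂π, ∀ i, 0 ≤ ψ i x)
    (hint : ∀ i, Integrable (ψ i) π)
    (hpos : ∀ i, 0 < ∫ x, ψ i x ∂π) :
    (∀ i j, 0 ≤ overlapMatrix π ψ i j) ∧
    (∀ i, ∑ j, overlapMatrix π ψ i j = 1) ∧
    (∀ i, 0 ≤ weightVector π ψ i) ∧
    (∑ i, weightVector π ψ i = 1) ∧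
    (∀ i j, weightVector π ψ i * overlapMatrix π ψ i j
      = weightVector π ψ j * overlapMatrix π ψ j i) ∧
    (∀ j, ∑ i, weightVector π ψ i * overlapMatrix π ψ i j = weightVector π ψ j) := by
  have hF (i : Fin L) : overlapMatrix π ψ i ∈ stdSimplex ℝ (Fin L) :=
    overlapMatrix_mem_stdSimplex (fun k ↦ (hint k).aemeasurable) hnonneg (hint i) (hpos i)
  have hz : weightVector π ψ ∈ stdSimplex ℝ (Fin L) := weightVector_mem_stdSimplex hpos
  have hrev (i j : Fin L) : weightVector π ψ i * overlapMatrix π ψ i j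
      = weightVector π ψ j * overlapMatrix π ψ j i :=
    weightVector_mul_overlapMatrix_comm (hpos i).ne' (hpos j).ne'
  exact ⟨fun i ↦ (hF i).1, fun i ↦ (hF i).2, hz.1, hz.2, hrev,
    fun j ↦ sum_mul_eq_of_reversible (fun i ↦ hrev i j) (hF j).2⟩

/-- the overlap matrix `F` is stochastic, the weight vector `z` is a probability
vector, `F` is reversible with respect to `z` (`z_i F_{ij} = z_j F_{ji}`), and consequently
`zᵀ F = zᵀ`, i.e. `z` is a stationary distribution of `F`. -/
theorem overlapMatrix_stochastic_and_reversible
    {Ω : Type*} [MeasurableSpace Ω] (π : Measure Ω) [IsProbabilityMeasure π]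
    {L : ℕ} (ψ : Fin L → Ω → ℝ)
    (hmeas : ∀ i, Measurable (ψ i))
    (hnonneg : ∀ i x, 0 ≤ ψ i x)
    (hsum : ∀ x, 0 < ∑ k, ψ k x)
    (hint : ∀ i, Integrable (ψ i) π)
    (hpos : ∀ i, 0 < ∫ x, ψ i x ∂π) :
    (∀ i j, 0 ≤ overlapMatrix π ψ i j) ∧
    (∀ i, ∑ j, overlapMatrix π ψ i j = 1) ∧
    (∀ i, 0 ≤ weightVector π ψ i) ∧
    (∑ i, weightVector π ψ i = 1) ∧
    (∀ i j, weightVector π ψ i * overlapMatrix π ψ i j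
      = weightVector π ψ j * overlapMatrix π ψ j i) ∧
    (∀ j, ∑ i, weightVector π ψ i * overlapMatrix π ψ i j = weightVector π ψ j) := by
  obtain ⟨x⟩ := nonempty_of_isProbabilityMeasure π
  have : NeZero L := ⟨by rintro rfl; simpa using hsum x⟩
  exact overlapMatrix_stochastic_and_reversible_general π ψ
    (.of_forall fun x i ↦ hnonneg i x) hint hpos
end

section
/- For every π-integrable function g : Ω → ℝ, one has π[g] = Ψ · Σ_{i=1}^L z_i π_i[g*], the normalizing constant satisfies Ψ = 1/Σ_{i=1}^L z_i π_i[1*], and hence π[g] = (Σ_{i=1}^L z_i π_i[g*]) / (Σ_{i=1}^L z_i π_i[1*]), where 1 denotes the constant function equal to one. -/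
/-! The functions `ψ_i / ∑_k ψ_k` form a partition of unity with values in `[0, 1]`, so
`π[g] = ∑_i π[ψ_i g*]` for every integrable `g`; boundedness of the weights is what makes each
`ψ_i g*` integrable. Since `Ψ z_i π_i[g*] = π[ψ_i g*]`, this is the first identity. The case `g = 1`
reads `π(Ω) = Ψ ∑_i z_i π_i[1*]`, and dividing the two identities gives the ratio formula. -/

open MeasureTheory Finset

/-- The expectation of `g` under the biased distribution `π_i(dx) = ψ_i(x) π(dx) / π[ψ_i]`. -/
noncomputable def biasedMean {Ω : Type*} [MeasurableSpace Ω] (π : Measure Ω) {L : ℕ}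
    (ψ : Fin L → Ω → ℝ) (i : Fin L) (g : Ω → ℝ) : ℝ :=
  (∫ x, ψ i x * g x ∂π) / (∫ x, ψ i x ∂π)

section PartitionOfUnity

variable {ι Ω E : Type*} [MeasurableSpace Ω] {μ : Measure Ω} [NormedAddCommGroup E]
  [NormedSpace ℝ E] {s : Finset ι} {g : Ω → E}

theorem integral_eq_sum_integral_smul_of_sum_ae_eq_one {ρ : ι → Ω → ℝ}
    (hρ : ∀ i ∈ s, AEStronglyMeasurable (ρ i) μ) (hρ_nonneg : ∀ i ∈ s, 0 ≤ᵐ[μ] ρ i)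
    (hρ_sum : ∀ᵐ x ∂μ, ∑ i ∈ s, ρ i x = 1) (hg : Integrable g μ) :
    ∫ x, g x ∂μ = ∑ i ∈ s, ∫ x, ρ i x • g x ∂μ := by
  have h_nonneg : ∀ᵐ x ∂μ, ∀ i ∈ s, 0 ≤ ρ i x := (ae_ball_iff s.countable_toSet).2 hρ_nonneg
  have h_integrable : ∀ i ∈ s, Integrable (fun x => ρ i x • g x) μ := by
    intro i hi
    refine hg.bdd_smul 1 (hρ i hi) ?_
    filter_upwards [h_nonneg, hρ_sum] with x hx hx_sum
    rw [Real.norm_of_nonneg (hx i hi), ← hx_sum]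
    exact single_le_sum hx hi
  rw [← integral_finsetSum s h_integrable]
  refine integral_congr_ae ?_
  filter_upwards [hρ_sum] with x hx
  rw [← sum_smul, hx, one_smul]

theorem integral_eq_sum_integral_div_sum_smul {ψ : ι → Ω → ℝ}
    (hψ : ∀ i ∈ s, AEStronglyMeasurable (ψ i) μ) (hψ_nonneg : ∀ i ∈ s, 0 ≤ᵐ[μ] ψ i)
    (hψ_sum : ∀ᵐ x ∂μ, 0 < ∑ k ∈ s, ψ k x) (hg : Integrable g μ) :
    ∫ x, g x ∂μ = ∑ i ∈ s, ∫ x, (ψ i x / ∑ k ∈ s, ψ k x) • g x ∂μ := by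
  refine integral_eq_sum_integral_smul_of_sum_ae_eq_one (fun i hi => ?_) (fun i hi => ?_) ?_ hg
  · exact (hψ i hi).div₀ (s.aestronglyMeasurable_fun_sum hψ)
  · filter_upwards [hψ_nonneg i hi, hψ_sum] with x hx hx_sum
    exact div_nonneg hx hx_sum.le
  · filter_upwards [hψ_sum] with x hx_sum
    rw [← sum_div, div_self hx_sum.ne']

end PartitionOfUnity

section BiasedMean

variable {Ω : Type*} [MeasurableSpace Ω] {π : Measure Ω} {L : ℕ} {ψ : Fin L → Ω → ℝ}

theorem sum_integral_mul_weightVector_mul_biasedMean {i : Fin L} (hi : ∫ x, ψ i x ∂π ≠ 0)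
    (hΨ : ∑ k, ∫ x, ψ k x ∂π ≠ 0) (h : Ω → ℝ) :
    (∑ k, ∫ x, ψ k x ∂π) * (weightVector π ψ i * biasedMean π ψ i h) = ∫ x, ψ i x * h x ∂π := by
  rw [weightVector, biasedMean, ← mul_assoc, mul_div_cancel₀ _ hΨ, mul_div_cancel₀ _ hi]

theorem integral_eq_sum_integral_mul_sum_weightVector_mul_biasedMean
    (hnonneg : ∀ i, 0 ≤ᵐ[π] ψ i) (hsum : ∀ᵐ x ∂π, 0 < ∑ k, ψ k x)
    (hint : ∀ i, Integrable (ψ i) π) (hpos : ∀ i, 0 < ∫ x, ψ i x ∂π)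
    {g : Ω → ℝ} (hg : Integrable g π) :
    ∫ x, g x ∂π = (∑ k, ∫ x, ψ k x ∂π) *
      ∑ i, weightVector π ψ i * biasedMean π ψ i (fun x => g x / ∑ k, ψ k x) := by
  rw [integral_eq_sum_integral_div_sum_smul (fun i _ => (hint i).aestronglyMeasurable)
    (fun i _ => hnonneg i) hsum hg, mul_sum]
  refine sum_congr rfl fun i _ => ?_
  have hΨ : 0 < ∑ k, ∫ x, ψ k x ∂π := sum_pos (fun k _ => hpos k) ⟨i, mem_univ i⟩
  rw [sum_integral_mul_weightVector_mul_biasedMean (hpos i).ne' hΨ.ne']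
  simp only [smul_eq_mul, div_mul_eq_mul_div, mul_div_assoc]

theorem emus_decomposition_of_average_general [IsFiniteMeasure π] [NeZero π]
    (hnonneg : ∀ i, 0 ≤ᵐ[π] ψ i) (hsum : ∀ᵐ x ∂π, 0 < ∑ k, ψ k x)
    (hint : ∀ i, Integrable (ψ i) π) (hpos : ∀ i, 0 < ∫ x, ψ i x ∂π)
    {g : Ω → ℝ} (hg : Integrable g π) :
    (∫ x, g x ∂π) = (∑ k, ∫ x, ψ k x ∂π) *
        ∑ i, weightVector π ψ i * biasedMean π ψ i (fun x => g x / ∑ k, ψ k x) ∧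
    (∑ k, ∫ x, ψ k x ∂π) = π.real Set.univ /
        ∑ i, weightVector π ψ i * biasedMean π ψ i (fun x => 1 / ∑ k, ψ k x) ∧
    (⨍ x, g x ∂π) =
        (∑ i, weightVector π ψ i * biasedMean π ψ i (fun x => g x / ∑ k, ψ k x)) /
        (∑ i, weightVector π ψ i * biasedMean π ψ i (fun x => 1 / ∑ k, ψ k x)) := by
  have hg_eq :=
    integral_eq_sum_integral_mul_sum_weightVector_mul_biasedMean hnonneg hsum hint hpos hg
  have hmass := integral_eq_sum_integral_mul_sum_weightVector_mul_biasedMean hnonneg hsum hint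
    hpos (integrable_const (1 : ℝ))
  rw [integral_const, smul_eq_mul, mul_one] at hmass
  obtain ⟨hΨ, hone⟩ := mul_ne_zero_iff.1 (hmass ▸ measureReal_univ_ne_zero)
  refine ⟨hg_eq, eq_div_of_mul_eq hone hmass.symm, ?_⟩
  rw [average_eq, smul_eq_mul, inv_mul_eq_div, hg_eq, hmass, mul_div_mul_left _ _ hΨ]

end BiasedMean

/-- for every `π`-integrable `g`, `π[g] = Ψ ∑_i z_i π_i[g*]`,
`Ψ = 1 / ∑_i z_i π_i[1*]`, and hence
`π[g] = (∑_i z_i π_i[g*]) / (∑_i z_i π_i[1*])`, where `g*(x) = g(x)/∑_k ψ_k(x)` and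
`1` is the constant function one. -/
theorem emus_decomposition_of_average
    {Ω : Type*} [MeasurableSpace Ω] (π : Measure Ω) [IsProbabilityMeasure π]
    {L : ℕ} (ψ : Fin L → Ω → ℝ)
    (hmeas : ∀ i, Measurable (ψ i))
    (hnonneg : ∀ i x, 0 ≤ ψ i x)
    (hsum : ∀ x, 0 < ∑ k, ψ k x)
    (hint : ∀ i, Integrable (ψ i) π)
    (hpos : ∀ i, 0 < ∫ x, ψ i x ∂π)
    (g : Ω → ℝ) (hg : Integrable g π) :
    (∫ x, g x ∂π) = (∑ k, ∫ x, ψ k x ∂π) *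
        ∑ i, weightVector π ψ i * biasedMean π ψ i (fun x => g x / ∑ k, ψ k x) ∧
    (∑ k, ∫ x, ψ k x ∂π) =
        1 / ∑ i, weightVector π ψ i * biasedMean π ψ i (fun x => 1 / ∑ k, ψ k x) ∧
    (∫ x, g x ∂π) =
        (∑ i, weightVector π ψ i * biasedMean π ψ i (fun x => g x / ∑ k, ψ k x)) /
        (∑ i, weightVector π ψ i * biasedMean π ψ i (fun x => 1 / ∑ k, ψ k x)) := by
  simpa only [probReal_univ, average_eq_integral] using emus_decomposition_of_average_general
    (fun i => .of_forall (hnonneg i)) (.of_forall hsum) hint hpos hg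
end

section
/- Under Assumption 4.1, there exist constants M₁, θ₊, θ₋ > 0 depending on V but not on M such that for all M ≥ M₁: setting K = M·⌈max_{0≤x≤M} |V'(x)|⌉ and h = M/K, the quantities F_{K,K−1} := (1/2)·(∫_{M−h}^M e^{−V(x)} dx)/(∫_{M−h}^∞ e^{−V(x)} dx) and F_{K,K+1} := (1/2)·(∫_M^∞ e^{−V(x)} dx)/(∫_{M−h}^∞ e^{−V(x)} dx) satisfy F_{K,K−1} ≥ θ₋ > 0 and F_{K,K+1} ≥ θ₊ > 0. -/
/-!
Write `m = V' M` and `r = m * h`, where `h` is the inverse of `L = ⌈max_{[0,M]} |V'|⌉`. Only a crude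
bound on `V'` near `0` and its monotonicity beyond `M₀` are needed to see that `r` stays between two
positive constants, since these give `m ≤ L ≤ C * m`. Convexity puts the graph of `V` above its
tangent at `M`, so that `exp (-V)` is at most `exp (r - V M)` on `[M - h, M]` and has mass at most
`exp (-V M) / m` beyond `M`. Conversely `exp (-V)` is at least `exp (-V M)` on `[M - h, M]`, and its
mass beyond `M` is at least `exp (-V M) / ((1 + α) * m)`, because `-exp (-V) / V'` has derivative
`exp (-V) * (1 + V'' / V' ^ 2)`. The masses of `[M - h, M]` and `[M, ∞)` are thus comparable.
-/

open MeasureTheory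

open Set Filter Topology

section Convex

variable {s : Set ℝ} {f f' : ℝ → ℝ} {m x y : ℝ}

lemma add_mul_sub_le_of_convexOn_of_hasDerivAt (hf : ConvexOn ℝ s f) (hx : x ∈ s) (hy : y ∈ s)
    (hm : HasDerivAt f m x) : f x + m * (y - x) ≤ f y := by
  rcases lt_trichotomy x y with hxy | rfl | hyx
  · have := hf.le_slope_of_hasDerivAt hx hy hxy hm
    rw [slope_def_field, le_div_iff₀ (sub_pos.mpr hxy)] at this
    linarith
  · simp
  · have := hf.slope_le_of_hasDerivAt hy hx hyx hm
    rw [slope_def_field, div_le_iff₀ (sub_pos.mpr hyx)] at this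
    linarith

lemma monotoneOn_of_convexOn_of_hasDerivAt (hf : ConvexOn ℝ s f)
    (hf' : ∀ x ∈ s, HasDerivAt f (f' x) x) : MonotoneOn f' s :=
  (hf.monotoneOn_deriv fun x hx ↦ (hf' x hx).differentiableAt).congr fun x hx ↦ (hf' x hx).deriv

lemma tendsto_atTop_of_convexOn_of_hasDerivAt_pos (hf : ConvexOn ℝ (Ici x) f)
    (hm : HasDerivAt f m x) (hm0 : 0 < m) : Tendsto f atTop atTop := by
  have htangent : Tendsto (fun y ↦ f x + m * (y - x)) atTop atTop :=
    tendsto_atTop_add_const_left _ _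
      ((tendsto_atTop_add_const_right _ (-x) tendsto_id).const_mul_atTop hm0)
  refine tendsto_atTop_mono' _ ?_ htangent
  filter_upwards [eventually_ge_atTop x] with y hy
  exact add_mul_sub_le_of_convexOn_of_hasDerivAt hf self_mem_Ici hy hm

lemma monotoneOn_of_convexOn_of_hasDerivAt_nonneg (hf : ConvexOn ℝ (Ici x) f)
    (hm : HasDerivAt f m x) (hm0 : 0 ≤ m) : MonotoneOn f (Ici x) := by
  have hmin : ∀ y ∈ Ici x, f x ≤ f y := fun y hy ↦
    (le_add_of_nonneg_right (mul_nonneg hm0 (sub_nonneg.mpr hy))).trans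
      (add_mul_sub_le_of_convexOn_of_hasDerivAt hf self_mem_Ici hy hm)
  intro y hy z hz hyz
  rcases eq_or_lt_of_le (mem_Ici.mp hy) with rfl | hxy
  · exact hmin z hz
  · exact hf.le_right_of_left_le'' self_mem_Ici hz hxy hyz (hmin y hy)

end Convex

lemma sub_le_setIntegral_Ioi_of_hasDerivAt_le {G G' φ : ℝ → ℝ} {a l : ℝ}
    (hG : ∀ x ∈ Ici a, HasDerivAt G (G' x) x) (hφ : IntegrableOn φ (Ioi a))
    (hle : ∀ x ∈ Ioi a, G' x ≤ φ x) (hlim : Tendsto G atTop (𝓝 l)) :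
    l - G a ≤ ∫ x in Ioi a, φ x := by
  refine le_of_tendsto_of_tendsto (hlim.sub_const _)
    (intervalIntegral_tendsto_integral_Ioi a hφ tendsto_id) ?_
  filter_upwards [eventually_ge_atTop a] with b hab
  exact intervalIntegral.sub_le_integral_of_hasDeriv_right_of_le hab
    (fun x hx ↦ (hG x hx.1).continuousAt.continuousWithinAt)
    (fun x hx ↦ (hG x hx.1.le).hasDerivWithinAt)
    ((integrableOn_Icc_iff_integrableOn_Ioc).mpr (hφ.mono_set Ioc_subset_Ioi_self))
    (fun x hx ↦ hle x hx.1)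

lemma setIntegral_Ioc_add_Ioi {f : ℝ → ℝ} {a b : ℝ} (hab : a ≤ b)
    (hf : IntegrableOn f (Ioi a)) :
    (∫ x in Ioc a b, f x) + ∫ x in Ioi b, f x = ∫ x in Ioi a, f x := by
  rw [← intervalIntegral.integral_of_le hab]
  exact intervalIntegral.integral_interval_add_Ioi hf (hf.mono_set (Ioi_subset_Ioi hab))

lemma one_div_two_mul_one_add_le_half_mul_div_add {x y C : ℝ} (hx : 0 < x) (hy : 0 ≤ y)
    (hyx : y ≤ C * x) : 1 / (2 * (1 + C)) ≤ 1 / 2 * x / (x + y) := by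
  have hC : 0 ≤ C := nonneg_of_mul_nonneg_left (hy.trans hyx) hx
  rw [div_le_div_iff₀ (by positivity) (by positivity)]
  linarith

section ExpNeg

variable {V V' V'' : ℝ → ℝ} {a b m α : ℝ}

lemma exp_neg_le_exp_mul_exp_of_convexOn (hV : ConvexOn ℝ (Ici b) V) (hm : HasDerivAt V m b)
    {x : ℝ} (hx : x ∈ Ici b) :
    Real.exp (-V x) ≤ Real.exp (m * b - V b) * Real.exp (-m * x) := by
  rw [← Real.exp_add, Real.exp_le_exp]
  linarith [add_mul_sub_le_of_convexOn_of_hasDerivAt hV self_mem_Ici hx hm]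

lemma integrableOn_exp_neg_Ioi_of_convexOn (hV : ConvexOn ℝ (Ici b) V) (hm : HasDerivAt V m b)
    (hm0 : 0 < m) : IntegrableOn (fun x ↦ Real.exp (-V x)) (Ioi b) := by
  have hcont : ContinuousOn V (Ioi b) := by simpa using hV.continuousOn_interior
  refine Integrable.mono'
    ((integrableOn_exp_mul_Ioi (neg_neg_of_pos hm0) b).const_mul (Real.exp (m * b - V b)))
    ((Real.continuous_exp.comp_continuousOn hcont.neg).aestronglyMeasurable measurableSet_Ioi)
    (ae_restrict_of_forall_mem measurableSet_Ioi fun x hx ↦ ?_)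
  rw [Real.norm_of_nonneg (Real.exp_nonneg _)]
  exact exp_neg_le_exp_mul_exp_of_convexOn hV hm (Ioi_subset_Ici_self hx)

lemma setIntegral_Ioi_exp_neg_le_div_of_convexOn (hV : ConvexOn ℝ (Ici b) V)
    (hm : HasDerivAt V m b) (hm0 : 0 < m) :
    ∫ x in Ioi b, Real.exp (-V x) ≤ Real.exp (-V b) / m := by
  calc ∫ x in Ioi b, Real.exp (-V x)
      ≤ ∫ x in Ioi b, Real.exp (m * b - V b) * Real.exp (-m * x) :=
        setIntegral_mono_on (integrableOn_exp_neg_Ioi_of_convexOn hV hm hm0)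
          ((integrableOn_exp_mul_Ioi (neg_neg_of_pos hm0) b).const_mul _) measurableSet_Ioi
          fun x hx ↦ exp_neg_le_exp_mul_exp_of_convexOn hV hm (Ioi_subset_Ici_self hx)
    _ = Real.exp (m * b - V b) * Real.exp (-m * b) / m := by
        rw [integral_const_mul, integral_exp_mul_Ioi (neg_neg_of_pos hm0), neg_div_neg_eq,
          mul_div_assoc]
    _ = Real.exp (-V b) / m := by
        rw [← Real.exp_add]
        ring_nf

lemma hasDerivAt_neg_exp_neg_div {x v'' : ℝ} (hV : HasDerivAt V (V' x) x)
    (hV' : HasDerivAt V' v'' x) (hne : V' x ≠ 0) :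
    HasDerivAt (fun y ↦ -(Real.exp (-V y) / V' y))
      (Real.exp (-V x) * (1 + v'' / V' x ^ 2)) x := by
  refine (hV.neg.exp.div hV' hne).neg.congr_deriv ?_
  simp only [Pi.neg_apply]
  field_simp
  ring

lemma exp_neg_div_deriv_le_setIntegral_Ioi (hV : ConvexOn ℝ (Ici b) V)
    (hV' : ∀ x ∈ Ici b, HasDerivAt V (V' x) x) (hV'' : ∀ x ∈ Ici b, HasDerivAt V' (V'' x) x)
    (hpos : 0 < V' b) (hα : ∀ x ∈ Ici b, V'' x ≤ α * V' x ^ 2) :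
    Real.exp (-V b) / V' b ≤ (1 + α) * ∫ x in Ioi b, Real.exp (-V x) := by
  have hb : HasDerivAt V (V' b) b := hV' b self_mem_Ici
  have hle : ∀ x ∈ Ici b, V' b ≤ V' x := fun x hx ↦
    monotoneOn_of_convexOn_of_hasDerivAt hV hV' self_mem_Ici hx hx
  have hlim : Tendsto (fun x ↦ -(Real.exp (-V x) / V' x)) atTop (𝓝 0) := by
    have hexp : Tendsto (fun x ↦ Real.exp (-V x)) atTop (𝓝 0) :=
      Real.tendsto_exp_neg_atTop_nhds_zero.comp
        (tendsto_atTop_of_convexOn_of_hasDerivAt_pos hV hb hpos)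
    have hbound : Tendsto (fun x ↦ Real.exp (-V x) / V' b) atTop (𝓝 0) := by
      simpa only [zero_div] using hexp.div_const (V' b)
    rw [← neg_zero]
    refine (squeeze_zero' ?_ ?_ hbound).neg <;> filter_upwards [eventually_ge_atTop b] with x hx
    · exact div_nonneg (Real.exp_nonneg _) (hpos.le.trans (hle x hx))
    · exact div_le_div_of_nonneg_left (Real.exp_nonneg _) hpos (hle x hx)
  have hslope : ∀ x ∈ Ioi b,
      Real.exp (-V x) * (1 + V'' x / V' x ^ 2) ≤ (1 + α) * Real.exp (-V x) := fun x hx ↦ by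
    have hxb : x ∈ Ici b := Ioi_subset_Ici_self hx
    have hratio : V'' x / V' x ^ 2 ≤ α :=
      (div_le_iff₀ (pow_pos (hpos.trans_le (hle x hxb)) 2)).mpr (hα x hxb)
    rw [mul_comm]
    gcongr
  have hFTC := sub_le_setIntegral_Ioi_of_hasDerivAt_le
    (fun x hx ↦ hasDerivAt_neg_exp_neg_div (hV' x hx) (hV'' x hx) (hpos.trans_le (hle x hx)).ne')
    ((integrableOn_exp_neg_Ioi_of_convexOn hV hb hpos).const_mul (1 + α)) hslope hlim
  rwa [zero_sub, neg_neg, integral_const_mul] at hFTC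

lemma sub_mul_exp_neg_le_setIntegral_Ioc (hab : a ≤ b) (hV : MonotoneOn V (Icc a b)) :
    (b - a) * Real.exp (-V b) ≤ ∫ x in Ioc a b, Real.exp (-V x) := by
  have hanti : AntitoneOn (fun x ↦ Real.exp (-V x)) (Icc a b) := fun x hx y hy hxy ↦
    Real.exp_le_exp.mpr (neg_le_neg (hV hx hy hxy))
  rw [mul_comm, ← Real.volume_real_Ioc_of_le hab]
  exact setIntegral_ge_of_const_le_real measurableSet_Ioc measure_Ioc_lt_top.ne
    (fun x hx ↦ hanti (Ioc_subset_Icc_self hx) (right_mem_Icc.mpr hab) hx.2)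
    ((hanti.integrableOn_isCompact isCompact_Icc).mono_set Ioc_subset_Icc_self)

lemma setIntegral_Ioc_exp_neg_le_of_convexOn (hab : a ≤ b) (hV : ConvexOn ℝ (Icc a b) V)
    (hm : HasDerivAt V m b) (hm0 : 0 ≤ m) :
    ∫ x in Ioc a b, Real.exp (-V x) ≤ (b - a) * Real.exp (m * (b - a) - V b) := by
  have hvol : volume.real (Ioc a b) = b - a := Real.volume_real_Ioc_of_le hab
  rw [mul_comm]
  refine (Real.le_norm_self _).trans ((norm_setIntegral_le_of_norm_le_const measure_Ioc_lt_top
    fun x hx ↦ ?_).trans_eq (congrArg _ hvol))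
  rw [Real.norm_of_nonneg (Real.exp_nonneg _), Real.exp_le_exp]
  have htangent := add_mul_sub_le_of_convexOn_of_hasDerivAt hV (right_mem_Icc.mpr hab)
    (Ioc_subset_Icc_self hx) hm
  have hshift : m * (b - x) ≤ m * (b - a) := by gcongr; exact hx.1.le
  linarith

lemma mul_setIntegral_Ioi_exp_neg_le_setIntegral_Ioc (hab : a ≤ b) (hmono : MonotoneOn V (Icc a b))
    (hV : ConvexOn ℝ (Ici b) V) (hm : HasDerivAt V m b) (hm0 : 0 < m) :
    m * (b - a) * ∫ x in Ioi b, Real.exp (-V x) ≤ ∫ x in Ioc a b, Real.exp (-V x) := by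
  have htail := setIntegral_Ioi_exp_neg_le_div_of_convexOn hV hm hm0
  rw [le_div_iff₀' hm0] at htail
  calc m * (b - a) * ∫ x in Ioi b, Real.exp (-V x)
      = (b - a) * (m * ∫ x in Ioi b, Real.exp (-V x)) := by ring
    _ ≤ (b - a) * Real.exp (-V b) := mul_le_mul_of_nonneg_left htail (sub_nonneg.mpr hab)
    _ ≤ ∫ x in Ioc a b, Real.exp (-V x) := sub_mul_exp_neg_le_setIntegral_Ioc hab hmono

lemma setIntegral_Ioc_exp_neg_le_mul_setIntegral_Ioi (hab : a ≤ b) (hV : ConvexOn ℝ (Ici a) V)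
    (hV' : ∀ x ∈ Ici b, HasDerivAt V (V' x) x) (hV'' : ∀ x ∈ Ici b, HasDerivAt V' (V'' x) x)
    (hpos : 0 < V' b) (hα : ∀ x ∈ Ici b, V'' x ≤ α * V' x ^ 2) :
    ∫ x in Ioc a b, Real.exp (-V x) ≤
      V' b * (b - a) * Real.exp (V' b * (b - a)) * (1 + α) * ∫ x in Ioi b, Real.exp (-V x) := by
  set r := V' b * (b - a) with hr
  have : 0 ≤ r := mul_nonneg hpos.le (sub_nonneg.mpr hab)
  calc ∫ x in Ioc a b, Real.exp (-V x)
      ≤ (b - a) * Real.exp (r - V b) :=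
        setIntegral_Ioc_exp_neg_le_of_convexOn hab (hV.subset Icc_subset_Ici_self (convex_Icc a b))
          (hV' b self_mem_Ici) hpos.le
    _ = r * Real.exp r * (Real.exp (-V b) / V' b) := by
        rw [sub_eq_add_neg r, Real.exp_add, hr]
        field_simp
    _ ≤ r * Real.exp r * ((1 + α) * ∫ x in Ioi b, Real.exp (-V x)) := by
        gcongr
        exact exp_neg_div_deriv_le_setIntegral_Ioi
          (hV.subset (Ici_subset_Ici.mpr hab) (convex_Ici b)) hV' hV'' hpos hα
    _ = r * Real.exp r * (1 + α) * ∫ x in Ioi b, Real.exp (-V x) := by ring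

lemma le_half_body_share_exp_neg (hint : IntegrableOn (fun x ↦ Real.exp (-V x)) (Ioi a))
    (hab : a < b) (hmono : MonotoneOn V (Icc a b)) (hV : ConvexOn ℝ (Ici b) V)
    (hm : HasDerivAt V m b) (hm0 : 0 < m) :
    1 / (2 * (1 + (m * (b - a))⁻¹)) ≤
      1 / 2 * (∫ x in Ioc a b, Real.exp (-V x)) / ∫ x in Ioi a, Real.exp (-V x) := by
  have hbody : 0 < ∫ x in Ioc a b, Real.exp (-V x) :=
    (mul_pos (sub_pos.mpr hab) (Real.exp_pos _)).trans_le
      (sub_mul_exp_neg_le_setIntegral_Ioc hab.le hmono)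
  have htail : 0 ≤ ∫ x in Ioi b, Real.exp (-V x) := integral_nonneg fun x ↦ Real.exp_nonneg _
  rw [← setIntegral_Ioc_add_Ioi hab.le hint]
  refine one_div_two_mul_one_add_le_half_mul_div_add hbody htail ?_
  rw [le_inv_mul_iff₀ (mul_pos hm0 (sub_pos.mpr hab))]
  exact mul_setIntegral_Ioi_exp_neg_le_setIntegral_Ioc hab.le hmono hV hm hm0

lemma le_half_tail_share_exp_neg (hint : IntegrableOn (fun x ↦ Real.exp (-V x)) (Ioi a))
    (hab : a ≤ b) (hV : ConvexOn ℝ (Ici a) V) (hV' : ∀ x ∈ Ici b, HasDerivAt V (V' x) x)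
    (hV'' : ∀ x ∈ Ici b, HasDerivAt V' (V'' x) x) (hpos : 0 < V' b)
    (hα : ∀ x ∈ Ici b, V'' x ≤ α * V' x ^ 2) :
    1 / (2 * (1 + V' b * (b - a) * Real.exp (V' b * (b - a)) * (1 + α))) ≤
      1 / 2 * (∫ x in Ioi b, Real.exp (-V x)) / ∫ x in Ioi a, Real.exp (-V x) := by
  have hbody : 0 ≤ ∫ x in Ioc a b, Real.exp (-V x) := integral_nonneg fun x ↦ Real.exp_nonneg _
  have htail : 0 < ∫ x in Ioi b, Real.exp (-V x) := by
    have : NeZero (volume (Ioi b)) := ⟨by simp⟩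
    exact integral_exp_pos (hint.mono_set (Ioi_subset_Ioi hab))
  rw [← setIntegral_Ioc_add_Ioi hab hint, add_comm (∫ x in Ioc a b, _)]
  exact one_div_two_mul_one_add_le_half_mul_div_add htail hbody
    (setIntegral_Ioc_exp_neg_le_mul_setIntegral_Ioi hab hV hV' hV'' hpos hα)

lemma le_half_shares_exp_neg {C : ℝ} (hab : a < b) (hV : ConvexOn ℝ (Ici a) V)
    (hV' : ∀ x ∈ Ici a, HasDerivAt V (V' x) x) (hV'' : ∀ x ∈ Ici b, HasDerivAt V' (V'' x) x)
    (hpos : 0 < V' a) (hα0 : 0 ≤ α) (hα : ∀ x ∈ Ici b, V'' x ≤ α * V' x ^ 2)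
    (hle : V' b * (b - a) ≤ 1) (hge : (V' b * (b - a))⁻¹ ≤ C) :
    1 / (2 * (1 + C)) ≤
        1 / 2 * (∫ x in Ioc a b, Real.exp (-V x)) / (∫ x in Ioi a, Real.exp (-V x)) ∧
      1 / (2 * (1 + Real.exp 1 * (1 + α))) ≤
        1 / 2 * (∫ x in Ioi b, Real.exp (-V x)) / (∫ x in Ioi a, Real.exp (-V x)) := by
  have ha : HasDerivAt V (V' a) a := hV' a self_mem_Ici
  have hint := integrableOn_exp_neg_Ioi_of_convexOn hV ha hpos
  have hmono : MonotoneOn V (Icc a b) :=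
    (monotoneOn_of_convexOn_of_hasDerivAt_nonneg hV ha hpos.le).mono Icc_subset_Ici_self
  have hbpos : 0 < V' b :=
    hpos.trans_le (monotoneOn_of_convexOn_of_hasDerivAt hV hV' self_mem_Ici hab.le hab.le)
  have : 0 < V' b * (b - a) := mul_pos hbpos (sub_pos.mpr hab)
  constructor
  · refine le_trans ?_ (le_half_body_share_exp_neg hint hab hmono
      (hV.subset (Ici_subset_Ici.mpr hab.le) (convex_Ici b)) (hV' b hab.le) hbpos)
    gcongr
  · refine le_trans ?_ (le_half_tail_share_exp_neg hint hab.le hV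
      (fun x hx ↦ hV' x (hab.le.trans hx)) hV'' hbpos hα)
    gcongr
    calc V' b * (b - a) * Real.exp (V' b * (b - a)) ≤ 1 * Real.exp 1 := by gcongr
      _ = Real.exp 1 := one_mul _

end ExpNeg

/-- The least integer bounding `|f|` on `s`. With `f = V'` and `s = [0, M]` it is the number
`⌈max_{[0,M]} |V'|⌉` of grid cells per unit length. It is real-valued because it enters only through
its inverse, the mesh size, and it takes the junk value `0` when `|f|` is unbounded on `s`. -/
noncomputable def ceilSupAbs (f : ℝ → ℝ) (s : Set ℝ) : ℝ :=
  (⌈sSup ((fun x ↦ |f x|) '' s)⌉ : ℝ)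

section CeilSupAbs

variable {f : ℝ → ℝ} {s : Set ℝ} {a b x B : ℝ}

lemma abs_le_ceilSupAbs (hf : BddAbove ((fun x ↦ |f x|) '' s)) (hx : x ∈ s) :
    |f x| ≤ ceilSupAbs f s :=
  (le_csSup hf (mem_image_of_mem _ hx)).trans (Int.le_ceil _)

lemma one_le_ceilSupAbs (hf : BddAbove ((fun x ↦ |f x|) '' s)) (hx : x ∈ s) (hfx : f x ≠ 0) :
    1 ≤ ceilSupAbs f s := by
  have hpos : 0 < ceilSupAbs f s := (abs_pos.mpr hfx).trans_le (abs_le_ceilSupAbs hf hx)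
  unfold ceilSupAbs at hpos ⊢
  exact_mod_cast hpos

lemma ceilSupAbs_le_add_one (hs : s.Nonempty) (hB : ∀ x ∈ s, |f x| ≤ B) :
    ceilSupAbs f s ≤ B + 1 :=
  (Int.ceil_lt_add_one _).le.trans
    (add_le_add_left (csSup_le (hs.image _) (forall_mem_image.mpr hB)) 1)

lemma exists_ceilSupAbs_Icc_le_mul (hab : a ≤ b) (hcont : ContinuousOn f (Icc a b))
    (hmono : MonotoneOn f (Ici b)) (hpos : 0 < f b) :
    ∃ C > 0, ∀ c ≥ b, ceilSupAbs f (Icc a c) ≤ C * f c := by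
  obtain ⟨B, hB⟩ : ∃ B, ∀ x ∈ Icc a b, |f x| ≤ B :=
    isCompact_Icc.exists_bound_of_continuousOn hcont
  have hB0 : 0 ≤ B := (abs_nonneg _).trans (hB b (right_mem_Icc.mpr hab))
  refine ⟨(B + 1) / f b + 1, by positivity, fun c hbc ↦ ?_⟩
  have hfbc : f b ≤ f c := hmono self_mem_Ici hbc hbc
  have hbound : ∀ x ∈ Icc a c, |f x| ≤ B + f c := fun x hx ↦ by
    rcases le_total x b with hxb | hbx
    · linarith [hB x ⟨hx.1, hxb⟩]
    · have hfx : 0 < f x := hpos.trans_le (hmono self_mem_Ici hbx hbx)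
      rw [abs_of_pos hfx]
      linarith [hmono hbx hbc hx.2]
  calc ceilSupAbs f (Icc a c)
      ≤ B + f c + 1 := ceilSupAbs_le_add_one (nonempty_Icc.mpr (hab.trans hbc)) hbound
    _ = (B + 1) / f b * f b + f c := by field_simp; ring
    _ ≤ (B + 1) / f b * f c + f c := by gcongr
    _ = ((B + 1) / f b + 1) * f c := by ring

lemma exists_ceilSupAbs_Icc_bounds (hab : a ≤ b) (hcont : ContinuousOn f (Ici a))
    (hmono : MonotoneOn f (Ici b)) (hpos : 0 < f b) :
    ∃ C > 0, ∀ c ≥ b, 1 ≤ ceilSupAbs f (Icc a c) ∧ f c ≤ ceilSupAbs f (Icc a c) ∧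
      ceilSupAbs f (Icc a c) ≤ C * f c := by
  obtain ⟨C, hC, hle⟩ :=
    exists_ceilSupAbs_Icc_le_mul hab (hcont.mono Icc_subset_Ici_self) hmono hpos
  refine ⟨C, hC, fun c hbc ↦ ?_⟩
  have hmem : c ∈ Icc a c := right_mem_Icc.mpr (hab.trans hbc)
  have hbdd : BddAbove ((fun x ↦ |f x|) '' Icc a c) :=
    isCompact_Icc.bddAbove_image (hcont.mono Icc_subset_Ici_self).abs
  have hfc : f c ≠ 0 := (hpos.trans_le (hmono self_mem_Ici hbc hbc)).ne'
  exact ⟨one_le_ceilSupAbs hbdd hmem hfc, (le_abs_self _).trans (abs_le_ceilSupAbs hbdd hmem),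
    hle c hbc⟩

end CeilSupAbs

theorem overlap_entries_bounded_below_small_prob_general
    (M₀ : ℝ) (hM₀ : 0 ≤ M₀) (V V' V'' : ℝ → ℝ) (α : ℝ)
    (hd1 : ∀ x ∈ Ici (0 : ℝ), HasDerivAt V (V' x) x)
    (hc1 : ContinuousOn V' (Ici (0 : ℝ)))
    (hd2 : ∀ x ∈ Ici M₀, HasDerivAt V' (V'' x) x)
    (hconv : ∀ x ∈ Ici M₀, 0 ≤ V'' x)
    (hVpos : ∀ x ∈ Ici M₀, 0 < V' x)
    (hα : ∀ x ∈ Ici M₀, V'' x ≤ α * V' x ^ 2) :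
    ∃ M₁ > 0, ∃ θp > 0, ∃ θm > 0, ∀ M ≥ M₁,
      let K : ℝ := M * (⌈sSup ((fun x ↦ |V' x|) '' Icc (0 : ℝ) M)⌉ : ℝ)
      let h : ℝ := M / K
      θm ≤ (1 / 2) * (∫ x in Ioc (M - h) M, Real.exp (-V x)) /
            (∫ x in Ioi (M - h), Real.exp (-V x)) ∧
      θp ≤ (1 / 2) * (∫ x in Ioi M, Real.exp (-V x)) /
            (∫ x in Ioi (M - h), Real.exp (-V x)) := by
  have hV' : ∀ x ∈ Ici M₀, HasDerivAt V (V' x) x := fun x hx ↦ hd1 x (hM₀.trans hx)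
  have hV : ConvexOn ℝ (Ici M₀) V := convexOn_of_hasDerivWithinAt2_nonneg (convex_Ici M₀)
    (fun x hx ↦ (hV' x hx).continuousAt.continuousWithinAt)
    (fun x hx ↦ (hV' x (interior_subset hx)).hasDerivWithinAt)
    (fun x hx ↦ (hd2 x (interior_subset hx)).hasDerivWithinAt)
    (fun x hx ↦ hconv x (interior_subset hx))
  have hα0 : 0 ≤ α := nonneg_of_mul_nonneg_left ((hconv M₀ self_mem_Ici).trans (hα M₀ self_mem_Ici))
    (pow_pos (hVpos M₀ self_mem_Ici) 2)
  obtain ⟨C, hC, hL⟩ := exists_ceilSupAbs_Icc_bounds hM₀ hc1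
    (monotoneOn_of_convexOn_of_hasDerivAt hV hV') (hVpos M₀ self_mem_Ici)
  refine ⟨M₀ + 1, by positivity, 1 / (2 * (1 + Real.exp 1 * (1 + α))), by positivity,
    1 / (2 * (1 + C)), by positivity, fun M hM ↦ ?_⟩
  intro K h
  have hM0 : 0 < M := by linarith
  have hMM₀ : M₀ ≤ M := by linarith
  obtain ⟨hL1, hmL, hLm⟩ := hL M hMM₀
  have hL0 : 0 < ceilSupAbs V' (Icc 0 M) := one_pos.trans_le hL1
  have hh : h = (ceilSupAbs V' (Icc 0 M))⁻¹ := div_mul_cancel_left₀ hM0.ne' _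
  have hh1 : h ≤ 1 := hh ▸ inv_le_one_of_one_le₀ hL1
  have hMh : M₀ ≤ M - h := by linarith
  refine le_half_shares_exp_neg (sub_lt_self M (hh ▸ inv_pos.mpr hL0))
    (hV.subset (Ici_subset_Ici.mpr hMh) (convex_Ici _)) (fun x hx ↦ hV' x (hMh.trans hx))
    (fun x hx ↦ hd2 x (hMM₀.trans hx)) (hVpos _ hMh) hα0 (fun x hx ↦ hα x (hMM₀.trans hx)) ?_ ?_
  all_goals rw [sub_sub_cancel, hh, ← div_eq_mul_inv]
  · exact (div_le_one hL0).mpr hmL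
  · rw [inv_div]
    exact (div_le_iff₀ (hVpos M hMM₀)).mpr hLm

/-- under Assumption 4.1 (`π = e^{−V}` a probability density on `[0,∞)`, `V`
C¹ on `[0,∞)` and C² on `[M₀,∞)` with `V'' ≥ 0`, `V' > 0`, and `αV'² − V'' ≥ c > 0` there),
there exist `M₁, θ₊, θ₋ > 0` depending on `V` but not on `M` such that for all `M ≥ M₁`,
with `K = M·⌈max_{0≤x≤M}|V'(x)|⌉` and `h = M/K`, the overlap entries
`F_{K,K−1} = (1/2)(∫_{M−h}^M e^{−V})/(∫_{M−h}^∞ e^{−V})` and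
`F_{K,K+1} = (1/2)(∫_M^∞ e^{−V})/(∫_{M−h}^∞ e^{−V})` satisfy `F_{K,K−1} ≥ θ₋` and
`F_{K,K+1} ≥ θ₊`. -/
theorem overlap_entries_bounded_below_small_prob
    (M₀ : ℝ) (hM₀ : 0 ≤ M₀) (V V' V'' : ℝ → ℝ) (α c : ℝ)
    (hα0 : 0 < α) (hα1 : α < 1) (hc : 0 < c)
    (hprob : (∫ x in Set.Ioi (0 : ℝ), Real.exp (-V x)) = 1)
    (hint : IntegrableOn (fun x => Real.exp (-V x)) (Set.Ioi (0 : ℝ)) volume)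
    (hd1 : ∀ x ∈ Set.Ici (0 : ℝ), HasDerivAt V (V' x) x)
    (hc1 : ContinuousOn V' (Set.Ici (0 : ℝ)))
    (hd2 : ∀ x ∈ Set.Ici M₀, HasDerivAt V' (V'' x) x)
    (hc2 : ContinuousOn V'' (Set.Ici M₀))
    (hconv : ∀ x ∈ Set.Ici M₀, 0 ≤ V'' x)
    (hVpos : ∀ x ∈ Set.Ici M₀, 0 < V' x)
    (herg : ∀ x ∈ Set.Ici M₀, c ≤ α * V' x ^ 2 - V'' x) :
    ∃ M₁ > 0, ∃ θp > 0, ∃ θm > 0, ∀ M ≥ M₁,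
      let K : ℝ := M * (⌈sSup ((fun x => |V' x|) '' Set.Icc (0 : ℝ) M)⌉ : ℝ)
      let h : ℝ := M / K
      θm ≤ (1 / 2) * (∫ x in Set.Ioc (M - h) M, Real.exp (-V x)) /
            (∫ x in Set.Ioi (M - h), Real.exp (-V x)) ∧
      θp ≤ (1 / 2) * (∫ x in Set.Ioi M, Real.exp (-V x)) /
            (∫ x in Set.Ioi (M - h), Real.exp (-V x)) := by
  exact overlap_entries_bounded_below_small_prob_general M₀ hM₀ V V' V'' α hd1 hc1 hd2 hconv hVpos
    fun x hx ↦ by linarith [herg x hx]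
end

section
/- Fix an integer K ≥ 2, data y₁,…,y_n ∈ ℝ, and positive constants α, g, h, κ, and m ∈ ℝ. Define the (unnormalized) posterior density of the hierarchical Gaussian mixture model by p(θ) = β^{Kα+g−1} (∏_{k=1}^K λ_k)^{α−1} exp{ −(κ/2) Σ_{k=1}^K (μ_k − m)² − β(h + Σ_{k=1}^K λ_k) } ∏_{i=1}^n ( Σ_{k=1}^K q_k λ_k^{1/2} exp{ −(λ_k/2)(y_i − μ_k)² } ), on the domain where λ₁,…,λ_K > 0, β > 0, μ₁,…,μ_K ∈ ℝ, q₁,…,q_K > 0 with Σ_k q_k = 1. If some data value y_j occurs among y₁,…,y_n with frequency N_j > 2g + 2(K−1)α, then p is unbounded on its domain. -/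
open MeasureTheory Finset

/-- The (unnormalized) posterior density of the hierarchical Gaussian mixture model:
`p(θ) = β^{Kα+g−1} (∏_k λ_k)^{α−1}
  exp{−(κ/2)∑_k(μ_k−m)² − β(h+∑_k λ_k)} ∏_i (∑_k q_k λ_k^{1/2} exp{−(λ_k/2)(y_i−μ_k)²})`. -/
noncomputable def mixturePosterior (K n : ℕ) (y : Fin n → ℝ) (α g hc κ m : ℝ)
    (μ lam q : Fin K → ℝ) (β : ℝ) : ℝ :=
  β ^ ((K : ℝ) * α + g - 1) * (∏ k, lam k) ^ (α - 1) *
    Real.exp (-(κ / 2) * ∑ k, (μ k - m) ^ 2 - β * (hc + ∑ k, lam k)) *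
    ∏ i, ∑ k, q k * lam k ^ ((1 : ℝ) / 2) * Real.exp (-(lam k / 2) * (y i - μ k) ^ 2)

/-!
Let one component `k₀` collapse onto the repeated value `a`: fix all weights and all other
components, and put `μ_{k₀} = a`, `λ_{k₀} = t`, `β = 1/t` with `t → ∞`. Since `β λ_{k₀} = 1`, the
exponential in the prior converges, and the prior is of exact order `t^{-(g + (K-1)α)}`. A mixture
factor is of exact order `t^{1/2}` at an observation equal to `a`; at any other observation the
collapsing component dies out and the factor tends to the positive contribution of the remaining
components. Altogether `p` is of exact order `t^{N/2 - g - (K-1)α}`, a positive power of `t`.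
-/

open Filter Function Topology

section GaussianMixture

variable {ι : Type*}

/-- The Gaussian mixture likelihood at `x`, up to the factor `(2π)^{-1/2}`, with means `μ`,
precisions `lam` and weights `q`. The sum runs over a finset `s` of components, so that the
contribution of the components that do not collapse can be expressed as well. -/
noncomputable def gaussianMixture (s : Finset ι) (μ lam q : ι → ℝ) (x : ℝ) : ℝ :=
  ∑ k ∈ s, q k * lam k ^ ((1 : ℝ) / 2) * Real.exp (-(lam k / 2) * (x - μ k) ^ 2)

lemma gaussianMixture_pos {s : Finset ι} {μ lam q : ι → ℝ} (hs : s.Nonempty)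
    (hlam : ∀ k ∈ s, 0 < lam k) (hq : ∀ k ∈ s, 0 < q k) (x : ℝ) :
    0 < gaussianMixture s μ lam q x :=
  sum_pos (fun k hk => mul_pos (mul_pos (hq k hk) (Real.rpow_pos_of_pos (hlam k hk) _))
    (Real.exp_pos _)) hs

variable [Fintype ι] [DecidableEq ι] (μ lam q : ι → ℝ) (k₀ : ι)

lemma gaussianMixture_update (a t x : ℝ) :
    gaussianMixture univ (update μ k₀ a) (update lam k₀ t) q x =
      q k₀ * (t ^ ((1 : ℝ) / 2) * Real.exp (-((x - a) ^ 2 / 2) * t)) +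
        gaussianMixture {k₀}ᶜ μ lam q x := by
  rw [gaussianMixture, Fintype.sum_eq_add_sum_compl k₀, update_self, update_self]
  congr 1
  · ring_nf
  · refine sum_congr rfl fun k hk => ?_
    have hne : k ≠ k₀ := by simpa only [mem_compl, mem_singleton] using hk
    rw [update_of_ne hne, update_of_ne hne]

lemma tendsto_gaussianMixture_update_of_ne {a x : ℝ} (hx : x ≠ a) :
    Tendsto (fun t => gaussianMixture univ (update μ k₀ a) (update lam k₀ t) q x) atTop
      (𝓝 (gaussianMixture {k₀}ᶜ μ lam q x)) := by
  have hdist : 0 < (x - a) ^ 2 / 2 := by have := sub_ne_zero.2 hx; positivity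
  simpa only [gaussianMixture_update, mul_zero, zero_add] using
    ((tendsto_rpow_mul_exp_neg_mul_atTop_nhds_zero (1 / 2) _ hdist).const_mul (q k₀)).add_const
      (gaussianMixture {k₀}ᶜ μ lam q x)

lemma tendsto_rpow_neg_half_mul_gaussianMixture_update_self (a : ℝ) :
    Tendsto (fun t : ℝ => t ^ (-(1 / 2) : ℝ) *
      gaussianMixture univ (update μ k₀ a) (update lam k₀ t) q a) atTop (𝓝 (q k₀)) := by
  have hlim : Tendsto (fun t : ℝ => q k₀ + t ^ (-(1 / 2) : ℝ) * gaussianMixture {k₀}ᶜ μ lam q a)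
      atTop (𝓝 (q k₀)) := by
    simpa only [zero_mul, add_zero] using
      ((tendsto_rpow_neg_atTop one_half_pos).mul_const _).const_add (q k₀)
  refine hlim.congr' ?_
  filter_upwards [eventually_gt_atTop 0] with t ht
  have hcancel : t ^ (-(1 / 2) : ℝ) * t ^ ((1 : ℝ) / 2) = 1 := by
    rw [← Real.rpow_add ht, neg_add_cancel, Real.rpow_zero]
  rw [gaussianMixture_update, sub_self, zero_pow two_ne_zero, zero_div, neg_zero, zero_mul,
    Real.exp_zero]
  linear_combination -(q k₀) * hcancel

lemma tendsto_rpow_mul_prod_gaussianMixture_update {ν : Type*} [Fintype ν] (y : ν → ℝ) (a : ℝ) :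
    Tendsto (fun t : ℝ => t ^ (-(Nat.card {i // y i = a} / 2) : ℝ) *
        ∏ i, gaussianMixture univ (update μ k₀ a) (update lam k₀ t) q (y i)) atTop
      (𝓝 (∏ i, if y i = a then q k₀ else gaussianMixture {k₀}ᶜ μ lam q (y i))) := by
  have hfactor (i : ν) : Tendsto (fun t : ℝ => (if y i = a then t ^ (-(1 / 2) : ℝ) else 1) *
        gaussianMixture univ (update μ k₀ a) (update lam k₀ t) q (y i)) atTop
      (𝓝 (if y i = a then q k₀ else gaussianMixture {k₀}ᶜ μ lam q (y i))) := by
    split_ifs with hi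
    · simpa only [hi] using tendsto_rpow_neg_half_mul_gaussianMixture_update_self μ lam q k₀ a
    · simpa only [one_mul] using tendsto_gaussianMixture_update_of_ne μ lam q k₀ hi
  refine (tendsto_finsetProd univ fun i _ => hfactor i).congr' ?_
  filter_upwards [eventually_ge_atTop 0] with t ht
  have hpow : ∏ i, (if y i = a then t ^ (-(1 / 2) : ℝ) else 1) =
      t ^ (-(Nat.card {i // y i = a} / 2) : ℝ) := by
    rw [prod_ite, prod_const_one, mul_one, prod_const, ← Fintype.card_subtype,
      ← Nat.card_eq_fintype_card, ← Real.rpow_mul_natCast ht]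
    ring_nf
  rw [prod_mul_distrib, hpow]

end GaussianMixture

section MixturePrior

variable {ι : Type*} [Fintype ι]

/-- The unnormalized prior density, i.e. the part of `mixturePosterior` that does not involve the
data: Gaussian means `μ`, gamma precisions `lam` with rate `β`, and a gamma distributed `β`. The
weights `q` have a uniform prior and do not occur. -/
noncomputable def mixturePrior (α g h κ m : ℝ) (μ lam : ι → ℝ) (β : ℝ) : ℝ :=
  β ^ ((Fintype.card ι : ℝ) * α + g - 1) * (∏ k, lam k) ^ (α - 1) *
    Real.exp (-(κ / 2) * ∑ k, (μ k - m) ^ 2 - β * (h + ∑ k, lam k))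

lemma mixturePosterior_eq_mixturePrior_mul_prod {K n : ℕ} (y : Fin n → ℝ) (α g h κ m : ℝ)
    (μ lam q : Fin K → ℝ) (β : ℝ) :
    mixturePosterior K n y α g h κ m μ lam q β =
      mixturePrior α g h κ m μ lam β * ∏ i, gaussianMixture univ μ lam q (y i) := by
  simp only [mixturePosterior, mixturePrior, gaussianMixture, Fintype.card_fin]

lemma tendsto_rpow_mul_mixturePrior_update [DecidableEq ι] (α g h κ m : ℝ) (μ : ι → ℝ)
    {lam : ι → ℝ} (hlam : ∀ k, 0 ≤ lam k) (k₀ : ι) :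
    Tendsto (fun t : ℝ => t ^ (g + ((Fintype.card ι : ℝ) - 1) * α) *
        mixturePrior α g h κ m μ (update lam k₀ t) t⁻¹) atTop
      (𝓝 ((∏ k ∈ {k₀}ᶜ, lam k) ^ (α - 1) *
        Real.exp (-(κ / 2) * ∑ k, (μ k - m) ^ 2 - 1))) := by
  set P := ∏ k ∈ {k₀}ᶜ, lam k
  set L := ∑ k ∈ {k₀}ᶜ, lam k
  set S := ∑ k, (μ k - m) ^ 2
  have hexponent : Tendsto (fun t : ℝ => -(κ / 2) * S - (1 + t⁻¹ * (h + L))) atTop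
      (𝓝 (-(κ / 2) * S - 1)) := by
    simpa only [zero_mul, add_zero] using
      ((tendsto_inv_atTop_zero.mul_const (h + L)).const_add 1).const_sub (-(κ / 2) * S)
  refine ((Real.continuous_exp.tendsto _).comp hexponent |>.const_mul (P ^ (α - 1))).congr' ?_
  filter_upwards [eventually_gt_atTop 0] with t ht
  have hprod : ∏ k, update lam k₀ t k = t * P := by
    rw [prod_update_of_mem (mem_univ k₀), ← compl_eq_univ_sdiff]
  have hsum : ∑ k, update lam k₀ t k = t + L := by
    rw [sum_update_of_mem (mem_univ k₀), ← compl_eq_univ_sdiff]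
  have hrate : t⁻¹ * (h + (t + L)) = 1 + t⁻¹ * (h + L) := by field_simp; ring
  have hpow : t ^ (g + ((Fintype.card ι : ℝ) - 1) * α) *
      (t⁻¹ ^ ((Fintype.card ι : ℝ) * α + g - 1) * t ^ (α - 1)) = 1 := by
    rw [Real.inv_rpow ht.le, ← Real.rpow_neg ht.le, ← Real.rpow_add ht, ← Real.rpow_add ht]
    convert Real.rpow_zero t using 2
    ring
  rw [mixturePrior, hprod, hsum, hrate, Real.mul_rpow ht.le (prod_nonneg fun k _ => hlam k),
    comp_apply]
  linear_combination
    -(P ^ (α - 1) * Real.exp (-(κ / 2) * S - (1 + t⁻¹ * (h + L)))) * hpow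

end MixturePrior

theorem tendsto_mixturePosterior_update_atTop {K n : ℕ} (hK : 2 ≤ K) (y : Fin n → ℝ)
    (α g h κ m a : ℝ)
    (hfreq : 2 * g + 2 * ((K : ℝ) - 1) * α < (Nat.card {i : Fin n // y i = a} : ℝ))
    (μ : Fin K → ℝ) {lam q : Fin K → ℝ} (hlam : ∀ k, 0 < lam k) (hq : ∀ k, 0 < q k) (k₀ : Fin K) :
    Tendsto (fun t => mixturePosterior K n y α g h κ m (update μ k₀ a) (update lam k₀ t) q t⁻¹)
      atTop atTop := by
  have hrest : ({k₀}ᶜ : Finset (Fin K)).Nonempty :=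
    have := Fin.nontrivial_iff_two_le.2 hK
    (exists_ne k₀).imp fun k hk => mem_compl.2 (notMem_singleton.2 hk)
  set N : ℝ := (Nat.card {i : Fin n // y i = a} : ℝ)
  have hexponent : 0 < N / 2 - (g + ((K : ℝ) - 1) * α) := by linarith
  have hprior := tendsto_rpow_mul_mixturePrior_update α g h κ m (update μ k₀ a)
    (fun k => (hlam k).le) k₀
  have hlik := tendsto_rpow_mul_prod_gaussianMixture_update μ lam q k₀ y a
  have hprior_pos : 0 < (∏ k ∈ {k₀}ᶜ, lam k) ^ (α - 1) *
      Real.exp (-(κ / 2) * ∑ k, (update μ k₀ a k - m) ^ 2 - 1) :=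
    mul_pos (Real.rpow_pos_of_pos (prod_pos fun k _ => hlam k) _) (Real.exp_pos _)
  have hlik_pos : 0 < ∏ i, if y i = a then q k₀ else gaussianMixture {k₀}ᶜ μ lam q (y i) := by
    refine prod_pos fun i _ => ?_
    split_ifs
    exacts [hq k₀, gaussianMixture_pos hrest (fun k _ => hlam k) (fun k _ => hq k) (y i)]
  refine ((tendsto_rpow_atTop hexponent).atTop_mul_pos (mul_pos hprior_pos hlik_pos)
    (hprior.mul hlik)).congr' ?_
  filter_upwards [eventually_gt_atTop 0] with t ht
  have hpow : t ^ (N / 2 - (g + ((K : ℝ) - 1) * α)) *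
      (t ^ (g + ((K : ℝ) - 1) * α) * t ^ (-(N / 2))) = 1 := by
    rw [← Real.rpow_add ht, ← Real.rpow_add ht]
    convert Real.rpow_zero t using 2
    ring
  rw [mixturePosterior_eq_mixturePrior_mul_prod, Fintype.card_fin]
  linear_combination (mixturePrior α g h κ m (update μ k₀ a) (update lam k₀ t) t⁻¹ *
    ∏ i, gaussianMixture univ (update μ k₀ a) (update lam k₀ t) q (y i)) * hpow

theorem mixturePosterior_unbounded_general {K n : ℕ} (hK : 2 ≤ K) (y : Fin n → ℝ)
    (α g h κ m a : ℝ)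
    (hfreq : 2 * g + 2 * ((K : ℝ) - 1) * α < (Nat.card {i : Fin n // y i = a} : ℝ))
    {q : Fin K → ℝ} (hq : ∀ k, 0 < q k) (C : ℝ) :
    ∃ (μ lam : Fin K → ℝ) (β : ℝ),
      (∀ k, 0 < lam k) ∧ 0 < β ∧ C < mixturePosterior K n y α g h κ m μ lam q β := by
  let k₀ : Fin K := ⟨0, by omega⟩
  have hblowup := tendsto_mixturePosterior_update_atTop hK y α g h κ m a hfreq 0
    (lam := 1) (fun _ => one_pos) hq k₀
  obtain ⟨t, hC, ht⟩ := ((hblowup.eventually_gt_atTop C).and (eventually_gt_atTop 0)).exists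
  have hlam : ∀ k, 0 < update (1 : Fin K → ℝ) k₀ t k :=
    (forall_update_iff _ fun _ x => 0 < x).2 ⟨ht, fun _ _ => one_pos⟩
  exact ⟨_, _, _, hlam, inv_pos.2 ht, hC⟩

/-- if some data value `y_j` occurs with frequency `N_j > 2g + 2(K−1)α`, then
the mixture posterior density is unbounded on its domain
`{λ_k > 0, β > 0, q_k > 0, ∑_k q_k = 1}`. -/
theorem mixturePosterior_unbounded (K n : ℕ) (hK : 2 ≤ K) (y : Fin n → ℝ)
    (α g hc κ : ℝ) (m : ℝ)
    (hα : 0 < α) (hg : 0 < g) (hhc : 0 < hc) (hκ : 0 < κ)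
    (j : Fin n)
    (hfreq : 2 * g + 2 * ((K : ℝ) - 1) * α < (Nat.card {i : Fin n // y i = y j} : ℝ)) :
    ∀ C : ℝ, ∃ (μ lam q : Fin K → ℝ) (β : ℝ),
      (∀ k, 0 < lam k) ∧ 0 < β ∧ (∀ k, 0 < q k) ∧ (∑ k, q k) = 1 ∧
      C < mixturePosterior K n y α g hc κ m μ lam q β := by
  intro C
  have hKpos : (0 : ℝ) < K := by positivity
  have hq : ∀ _ : Fin K, (0 : ℝ) < (K : ℝ)⁻¹ := fun _ => inv_pos.2 hKpos
  obtain ⟨μ, lam, β, hlam, hβ, hC⟩ :=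
    mixturePosterior_unbounded_general hK y α g hc κ m (y j) hfreq hq C
  refine ⟨μ, lam, _, β, hlam, hβ, hq, ?_, hC⟩
  rw [Fin.sum_const, nsmul_eq_mul, mul_inv_cancel₀ hKpos.ne']
end

section
/- There exists an open set O ⊂ ℝ^{L×L} containing every irreducible stochastic L×L matrix, and a continuously differentiable map w̃ : O → ℝ^L, such that for every irreducible stochastic matrix F, w̃(F) is the unique probability vector w satisfying w^⊤ F = w^⊤. In particular, the map assigning to an irreducible stochastic matrix its stationary probability vector is differentiable. -/
/-!
For a stochastic matrix `F` whose only harmonic vectors `F y = y` are the constants, the matrix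
`G(F) = 1 - F + J`, with `J` the all-ones matrix, is invertible: if `G(F) y = 0` then `y - F y` is a
constant, which the maximum principle at a maximum and a minimum of `y` forces to vanish; so `y` is
a constant with zero sum. A vector `w` of total mass one is stationary exactly when
`wᵀ G(F) = 1ᵀ`, so the stationary vector is `1ᵀ G(F)⁻¹`, which is analytic in `F` where
`det G(F) ≠ 0`. It is nonnegative because its entrywise absolute value is again stationary and
therefore a multiple of it. For irreducible `F` the harmonic vectors are constant, since the set
where such a vector attains its maximum cannot be left with positive probability.
-/

open Finset

/-- A matrix (as an element of `ℝ^{L×L}`) is stochastic: nonnegative entries, rows sum to 1. -/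
def IsStochastic {L : ℕ} (F : Fin L → Fin L → ℝ) : Prop :=
  (∀ i j, 0 ≤ F i j) ∧ ∀ i, ∑ j, F i j = 1

open Matrix
open scoped ContDiff

section MaximumPrinciple

variable {n R : Type*} [Fintype n] [DecidableEq n] [Ring R] [LinearOrder R] [IsStrictOrderedRing R]
  {F : Matrix n n R} {y v : n → R}

lemma mulVec_apply_le_of_mem_rowStochastic (hF : F ∈ rowStochastic R n) {M : R}
    (hM : ∀ j, y j ≤ M) (i : n) : (F *ᵥ y) i ≤ M :=
  calc ∑ j, F i j * y j ≤ ∑ j, F i j * M :=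
        sum_le_sum fun j _ => mul_le_mul_of_nonneg_left (hM j) (hF.1 i j)
    _ = M := by rw [← sum_mul, sum_row_of_mem_rowStochastic hF, one_mul]

lemma nonneg_of_sub_mulVec_eq_const [Nonempty n] (hF : F ∈ rowStochastic R n) {c : R}
    (hy : y - F *ᵥ y = Function.const n c) : 0 ≤ c := by
  obtain ⟨a, ha⟩ := Finite.exists_max y
  calc 0 ≤ y a - (F *ᵥ y) a := sub_nonneg.mpr (mulVec_apply_le_of_mem_rowStochastic hF ha a)
    _ = c := congrFun hy a

lemma eq_zero_of_sub_mulVec_eq_const [Nonempty n] (hF : F ∈ rowStochastic R n) {c : R}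
    (hy : y - F *ᵥ y = Function.const n c) : c = 0 := by
  have hneg : -y - F *ᵥ -y = Function.const n (-c) := by
    rw [mulVec_neg, neg_sub_neg, ← neg_sub, hy]
    rfl
  exact le_antisymm (neg_nonneg.mp (nonneg_of_sub_mulVec_eq_const hF hneg))
    (nonneg_of_sub_mulVec_eq_const hF hy)

lemma eq_of_pos_of_mulVec_eq_self (hF : F ∈ rowStochastic R n) (hy : F *ᵥ y = y) {i j : n}
    (hmax : ∀ k, y k ≤ y j) (hij : 0 < F j i) : y i = y j := by
  have hsum : ∑ k, F j k * (y j - y k) = 0 := by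
    have hj : ∑ k, F j k * y k = y j := congrFun hy j
    simp only [mul_sub, sum_sub_distrib, ← sum_mul, sum_row_of_mem_rowStochastic hF, hj, one_mul,
      sub_self]
  have hterm : F j i * (y j - y i) = 0 :=
    (sum_eq_zero_iff_of_nonneg fun k _ => mul_nonneg (hF.1 j k) (sub_nonneg.mpr (hmax k))).mp
      hsum i (mem_univ i)
  exact (sub_eq_zero.mp ((mul_eq_zero.mp hterm).resolve_left hij.ne')).symm

lemma exists_eq_const_of_mulVec_eq_self [Nonempty n] (hF : F ∈ rowStochastic R n)
    (hirr : ∀ A : Finset n, A.Nonempty → A ≠ univ → ∃ i ∈ A, ∃ j ∉ A, 0 < F j i)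
    (hy : F *ᵥ y = y) : ∃ c, y = Function.const n c := by
  obtain ⟨a, ha⟩ := Finite.exists_max y
  refine ⟨y a, funext fun k => ?_⟩
  by_contra hk
  obtain ⟨i, hi, j, hj, hij⟩ := hirr {i | y i ≠ y a} ⟨k, by simpa using hk⟩
    fun h => by simpa using h.ge (mem_univ a)
  have hja : y j = y a := by simpa using hj
  have hia : y i ≠ y a := by simpa using hi
  exact hia ((eq_of_pos_of_mulVec_eq_self hF hy (hja ▸ ha) hij).trans hja)

/-- The triangle inequality gives `|v| ≤ |v| F` entrywise, and both sides have the same sum. -/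
lemma abs_vecMul_of_vecMul_eq_self (hF : F ∈ rowStochastic R n) (hv : v ᵥ* F = v) :
    |v| ᵥ* F = |v| := by
  have hle (j : n) : |v j| ≤ ∑ i, |v i| * F i j :=
    calc |v j| = |∑ i, v i * F i j| := congrArg abs (congrFun hv j).symm
      _ ≤ ∑ i, |v i * F i j| := abs_sum_le_sum_abs _ _
      _ = ∑ i, |v i| * F i j := by simp only [abs_mul, abs_of_nonneg (hF.1 _ _)]
  have hsum : ∑ j, |v j| = ∑ j, ∑ i, |v i| * F i j := by
    rw [sum_comm]
    simp only [← mul_sum, sum_row_of_mem_rowStochastic hF, mul_one]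
  funext j
  exact ((sum_eq_sum_iff_of_le fun j _ => hle j).mp hsum j (mem_univ j)).symm

end MaximumPrinciple

section StationaryVector

variable {n R : Type*} [Fintype n] [DecidableEq n]

/-- The Laplacian `1 - F` of the Markov chain `F`, shifted by the all-ones matrix `vecMulVec 1 1`
to remove the constant vectors from its kernel. -/
def shiftedLaplacian [Ring R] (F : Matrix n n R) : Matrix n n R :=
  1 - F + vecMulVec 1 1

/-- The candidate stationary vector of `F`, i.e. the solution `w` of
`w ᵥ* shiftedLaplacian F = 1`; it has the junk value `0` if `shiftedLaplacian F`
is not invertible. -/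
noncomputable def stationaryVec [CommRing R] (F : Matrix n n R) : n → R :=
  1 ᵥ* (shiftedLaplacian F)⁻¹

lemma shiftedLaplacian_mulVec [Ring R] (F : Matrix n n R) (y : n → R) :
    shiftedLaplacian F *ᵥ y = y - F *ᵥ y + Function.const n (∑ i, y i) := by
  rw [shiftedLaplacian, add_mulVec, sub_mulVec, one_mulVec, vecMulVec_mulVec, one_dotProduct]
  ext
  simp

lemma vecMul_shiftedLaplacian [Ring R] (F : Matrix n n R) (v : n → R) :
    v ᵥ* shiftedLaplacian F = v - v ᵥ* F + Function.const n (∑ i, v i) := by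
  rw [shiftedLaplacian, vecMul_add, vecMul_sub, vecMul_one, vecMul_vecMulVec, dotProduct_one]
  ext
  simp

section CommRing

variable [CommRing R] {F : Matrix n n R}

lemma stationaryVec_vecMul_shiftedLaplacian (hG : IsUnit (shiftedLaplacian F).det) :
    stationaryVec F ᵥ* shiftedLaplacian F = 1 := by
  rw [stationaryVec, vecMul_vecMul, nonsing_inv_mul _ hG, vecMul_one]

lemma eq_sum_smul_stationaryVec (hG : IsUnit (shiftedLaplacian F).det) {v : n → R}
    (hv : v ᵥ* F = v) : v = (∑ i, v i) • stationaryVec F := by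
  have hvG : v ᵥ* shiftedLaplacian F = (∑ i, v i) • 1 := by
    rw [vecMul_shiftedLaplacian, hv, sub_self, zero_add]
    ext
    simp
  calc v = (v ᵥ* shiftedLaplacian F) ᵥ* (shiftedLaplacian F)⁻¹ := by
        rw [vecMul_vecMul, mul_nonsing_inv _ hG, vecMul_one]
    _ = (∑ i, v i) • stationaryVec F := by rw [hvG, smul_vecMul, stationaryVec]

variable [NoZeroDivisors R] [CharZero R] [Nonempty n]

/-- Pair `w ᵥ* G = 1` with the all-ones vector, for which `G *ᵥ 1 = card n • 1`. -/
lemma sum_stationaryVec (hF : F *ᵥ 1 = 1) (hG : IsUnit (shiftedLaplacian F).det) :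
    ∑ i, stationaryVec F i = 1 := by
  have hG_one : shiftedLaplacian F *ᵥ 1 = (Fintype.card n : R) • 1 := by
    rw [shiftedLaplacian_mulVec, hF, sub_self, zero_add]
    ext
    simp
  have hcard : (Fintype.card n : R) ≠ 0 := Nat.cast_ne_zero.mpr Fintype.card_ne_zero
  refine mul_left_cancel₀ hcard ?_
  calc (Fintype.card n : R) * ∑ i, stationaryVec F i
      = stationaryVec F ⬝ᵥ (shiftedLaplacian F *ᵥ 1) := by
        rw [hG_one, dotProduct_smul, dotProduct_one, smul_eq_mul]
    _ = (stationaryVec F ᵥ* shiftedLaplacian F) ⬝ᵥ 1 := dotProduct_mulVec _ _ _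
    _ = Fintype.card n * 1 := by simp [stationaryVec_vecMul_shiftedLaplacian hG]

lemma stationaryVec_vecMul (hF : F *ᵥ 1 = 1) (hG : IsUnit (shiftedLaplacian F).det) :
    stationaryVec F ᵥ* F = stationaryVec F := by
  have h : stationaryVec F - stationaryVec F ᵥ* F + Function.const n 1 = 1 := by
    rw [← sum_stationaryVec hF hG, ← vecMul_shiftedLaplacian,
      stationaryVec_vecMul_shiftedLaplacian hG]
  exact (sub_eq_zero.mp (add_eq_right.mp h)).symm

end CommRing

section Ordered

variable [CommRing R] [LinearOrder R] [IsStrictOrderedRing R] [Nonempty n] {F : Matrix n n R}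

lemma det_shiftedLaplacian_ne_zero (hF : F ∈ rowStochastic R n)
    (hconst : ∀ y, F *ᵥ y = y → ∃ c, y = Function.const n c) : (shiftedLaplacian F).det ≠ 0 := by
  intro hdet
  obtain ⟨y, hy0, hy⟩ := exists_mulVec_eq_zero_iff.mpr hdet
  rw [shiftedLaplacian_mulVec] at hy
  have hsum : ∑ i, y i = 0 :=
    neg_eq_zero.mp (eq_zero_of_sub_mulVec_eq_const hF (eq_neg_of_add_eq_zero_left hy))
  have hharm : F *ᵥ y = y := by
    rw [hsum, Function.const_zero, add_zero] at hy
    exact (sub_eq_zero.mp hy).symm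
  obtain ⟨c, rfl⟩ := hconst y hharm
  have hc : c = 0 := by simpa using hsum
  exact hy0 (by rw [hc, Function.const_zero])

lemma stationaryVec_nonneg (hF : F ∈ rowStochastic R n) (hG : IsUnit (shiftedLaplacian F).det)
    (i : n) : 0 ≤ stationaryVec F i := by
  set w := stationaryVec F with hw
  have habs : |w| = (∑ j, |w j|) • w :=
    eq_sum_smul_stationaryVec hG (abs_vecMul_of_vecMul_eq_self hF (stationaryVec_vecMul hF.2 hG))
  have hpos : 0 < ∑ j, |w j| :=
    calc 0 < ∑ j, w j := by rw [hw, sum_stationaryVec hF.2 hG]; exact one_pos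
      _ ≤ ∑ j, |w j| := sum_le_sum fun j _ => le_abs_self (w j)
  refine nonneg_of_mul_nonneg_right ?_ hpos
  calc 0 ≤ |w i| := abs_nonneg _
    _ = (∑ j, |w j|) * w i := congrFun habs i

end Ordered

end StationaryVector

section Smoothness

variable {𝕜 E n : Type*} [NontriviallyNormedField 𝕜] [NormedAddCommGroup E] [NormedSpace 𝕜 E]
  [Fintype n] [DecidableEq n] {k : ℕ∞ω} {x : E}

lemma contDiffAt_matrix_det {A : Type*} [NormedCommRing A] [NormedAlgebra 𝕜 A]
    {M : E → Matrix n n A} (hM : ∀ i j, ContDiffAt 𝕜 k (fun e => M e i j) x) :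
    ContDiffAt 𝕜 k (fun e => (M e).det) x := by
  simp only [det_apply']
  exact ContDiffAt.sum fun σ _ => contDiffAt_const.mul (contDiffAt_prod fun i _ => hM _ _)

lemma contDiffAt_matrix_adjugate_apply {A : Type*} [NormedCommRing A] [NormedAlgebra 𝕜 A]
    {M : E → Matrix n n A} (hM : ∀ i j, ContDiffAt 𝕜 k (fun e => M e i j) x) (i j : n) :
    ContDiffAt 𝕜 k (fun e => (M e).adjugate i j) x := by
  simp only [adjugate_apply]
  refine contDiffAt_matrix_det fun a b => ?_
  simp only [updateRow_apply]
  split_ifs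
  · exact contDiffAt_const
  · exact hM a b

lemma contDiffAt_matrix_inv_apply {K : Type*} [NormedField K] [NormedAlgebra 𝕜 K]
    {M : E → Matrix n n K} (hM : ∀ i j, ContDiffAt 𝕜 k (fun e => M e i j) x)
    (hx : (M x).det ≠ 0) (i j : n) : ContDiffAt 𝕜 k (fun e => (M e)⁻¹ i j) x := by
  simp only [Matrix.inv_def, Ring.inverse_eq_inv', Matrix.smul_apply, smul_eq_mul]
  exact ((contDiffAt_matrix_det hM).fun_inv hx).mul (contDiffAt_matrix_adjugate_apply hM i j)

lemma contDiff_shiftedLaplacian_apply (i j : n) :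
    ContDiff 𝕜 k fun F : n → n → 𝕜 => shiftedLaplacian (of F) i j := by
  simp only [shiftedLaplacian, Matrix.add_apply, Matrix.sub_apply, of_apply]
  fun_prop

lemma contDiffAt_stationaryVec {F : n → n → 𝕜} (hF : (shiftedLaplacian (of F)).det ≠ 0) :
    ContDiffAt 𝕜 k (fun F : n → n → 𝕜 => stationaryVec (of F)) F :=
  contDiffAt_pi.mpr fun i => ContDiffAt.sum fun j _ => contDiffAt_const.mul
    (contDiffAt_matrix_inv_apply (M := fun F => shiftedLaplacian (of F))
      (fun a b => (contDiff_shiftedLaplacian_apply a b).contDiffAt) hF j i)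

lemma isOpen_det_shiftedLaplacian_ne_zero :
    IsOpen {F : n → n → 𝕜 | (shiftedLaplacian (of F)).det ≠ 0} :=
  isOpen_ne_fun (Continuous.matrix_det (continuous_matrix fun i j =>
    (contDiff_shiftedLaplacian_apply (k := 0) i j).continuous)) continuous_const

end Smoothness

/-- For a stochastic matrix, the condition that harmonic vectors are constant means that the chain
has a single recurrent class; transient states are allowed. -/
theorem stationary_vector_differentiable_general (n : Type*) [Fintype n] [DecidableEq n]
    [Nonempty n] :
    ∃ (O : Set (n → n → ℝ)) (w : (n → n → ℝ) → n → ℝ),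
      IsOpen O ∧ ContDiffOn ℝ ω w O ∧
      ∀ F : n → n → ℝ, of F ∈ rowStochastic ℝ n →
        (∀ y, of F *ᵥ y = y → ∃ c, y = Function.const n c) →
        F ∈ O ∧
        (∀ i, 0 ≤ w F i) ∧ (∑ i, w F i = 1) ∧ (w F ᵥ* of F = w F) ∧
        ∀ v : n → ℝ, (∑ i, v i = 1) → v ᵥ* of F = v → v = w F := by
  refine ⟨{F | (shiftedLaplacian (of F)).det ≠ 0}, fun F => stationaryVec (of F),
    isOpen_det_shiftedLaplacian_ne_zero,
    fun F hF => (contDiffAt_stationaryVec hF).contDiffWithinAt, fun F hF hconst => ?_⟩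
  have hdet := det_shiftedLaplacian_ne_zero hF hconst
  have hG := hdet.isUnit
  refine ⟨hdet, stationaryVec_nonneg hF hG, sum_stationaryVec hF.2 hG,
    stationaryVec_vecMul hF.2 hG, fun v hsum hv => ?_⟩
  simpa only [hsum, one_smul] using eq_sum_smul_stationaryVec hG hv

/-- there is an open set `O ⊂ ℝ^{L×L}` containing every irreducible stochastic
matrix and a continuously differentiable map `w̃ : O → ℝ^L` such that for every irreducible
stochastic `F`, `w̃(F)` is the unique probability vector `w` with `wᵀF = wᵀ`. -/
theorem stationary_vector_differentiable (L : ℕ) (hL : 0 < L) :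
    ∃ (O : Set (Fin L → Fin L → ℝ)) (w : (Fin L → Fin L → ℝ) → Fin L → ℝ),
      IsOpen O ∧ ContDiffOn ℝ 1 w O ∧
      ∀ F : Fin L → Fin L → ℝ, IsStochastic F → MatIrreducible F →
        F ∈ O ∧
        (∀ i, 0 ≤ w F i) ∧ (∑ i, w F i = 1) ∧ (∀ j, ∑ i, w F i * F i j = w F j) ∧
        ∀ v : Fin L → ℝ, (∀ i, 0 ≤ v i) → (∑ i, v i = 1) →
          (∀ j, ∑ i, v i * F i j = v j) → v = w F := by
  have : Nonempty (Fin L) := ⟨⟨0, hL⟩⟩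
  obtain ⟨O, w, hO, hw, h⟩ := stationary_vector_differentiable_general (Fin L)
  refine ⟨O, w, hO, hw.of_le le_top, fun F hF hI => ?_⟩
  have hF' : of F ∈ rowStochastic ℝ (Fin L) := mem_rowStochastic_iff_sum.mpr hF
  obtain ⟨hFO, hnonneg, hsum, hstat, huniq⟩ :=
    h F hF' fun _ => exists_eq_const_of_mulVec_eq_self hF' hI
  exact ⟨hFO, hnonneg, hsum, congrFun hstat, fun v _ hv1 hv => huniq v hv1 (funext hv)⟩
end
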